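/- Let n ≥ 2, let p, q ∈ M_n with p ≠ 1, q ≠ 1 and p ≠ q, and suppose v_1 := p·x = q·y and v_2 := p·w = q·z for some letters x, y, w, z ∈ X_n. Then v_1 and v_2 are intersection bases and v_1 = v_2. -/

import Mathlib

namespace Malcev

/-- The alphabet `X_n`: letters `a, b, c, d` together with `A_i, B_i, C_i, D_i`
for `i` ranging over `Fin n` (so `A ⟨0, _⟩` represents `A_1`, etc.). -/
inductive Letter (n : ℕ) : Type
  | a | b | c | d
  | A (i : Fin n) | B (i : Fin n) | C (i : Fin n) | D (i : Fin n)
  deriving DecidableEq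

open FreeMonoid

/-- The defining relations `ρ_n`. -/
inductive rel (n : ℕ) : FreeMonoid (Letter n) → FreeMonoid (Letter n) → Prop
  | da (h : 0 < n) :
      rel n (of .d * of .a) (of (.A ⟨0, h⟩) * of (.C ⟨0, h⟩))
  | AD (i : ℕ) (h : i + 1 < n) :
      rel n (of (.A ⟨i, Nat.lt_of_succ_lt h⟩) * of (.D ⟨i, Nat.lt_of_succ_lt h⟩))
            (of (.A ⟨i + 1, h⟩) * of (.C ⟨i + 1, h⟩))
  | An (h : 0 < n) :
      rel n (of (.A ⟨n - 1, Nat.sub_lt h Nat.one_pos⟩) * of (.D ⟨n - 1, Nat.sub_lt h Nat.one_pos⟩))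
            (of .d * of .b)
  | cb (h : 0 < n) :
      rel n (of .c * of .b)
            (of (.B ⟨n - 1, Nat.sub_lt h Nat.one_pos⟩) * of (.D ⟨n - 1, Nat.sub_lt h Nat.one_pos⟩))
  | BC (i : ℕ) (h : i + 1 < n) :
      rel n (of (.B ⟨i + 1, h⟩) * of (.C ⟨i + 1, h⟩))
            (of (.B ⟨i, Nat.lt_of_succ_lt h⟩) * of (.D ⟨i, Nat.lt_of_succ_lt h⟩))

/-- The congruence on the free monoid generated by `ρ_n`. -/
def Mcon (n : ℕ) : Con (FreeMonoid (Letter n)) := conGen (rel n)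

/-- The presented monoid `M_n = Mon⟨X_n | ρ_n⟩`. -/
abbrev Mn (n : ℕ) : Type := (Mcon n).Quotient

/-- The quotient (natural) map `X_n* → M_n`. -/
def mk (n : ℕ) : FreeMonoid (Letter n) →* Mn n := (Mcon n).mk'

/-- The image in `M_n` of a single letter. -/
def gen {n : ℕ} (x : Letter n) : Mn n := mk n (of x)

/-- The image in `M_n` of a word (given as a list of letters). -/
def word {n : ℕ} (w : List (Letter n)) : Mn n := mk n (ofList w)

/-- The set `P_n = {c, d, A_1, …, A_n, B_1, …, B_n}`. -/
def inP {n : ℕ} : Letter n → Prop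
  | .c => True | .d => True | .A _ => True | .B _ => True | _ => False

/-- The set `Q_n = {a, b, C_1, …, C_n, D_1, …, D_n}`. -/
def inQ {n : ℕ} : Letter n → Prop
  | .a => True | .b => True | .C _ => True | .D _ => True | _ => False

/-- `inR x y` means the two-letter word `xy` belongs to
`R_n = {db, A_1C_1, …, A_nC_n, B_1D_1, …, B_nD_n}`. -/
def inR {n : ℕ} : Letter n → Letter n → Prop
  | .d, .b => True
  | .A i, .C j => i = j
  | .B i, .D j => i = j
  | _, _ => False

/-- `inL x y` means the two-letter word `xy` belongs to
`L_n = {cb, da, A_1D_1, …, A_nD_n, B_2C_2, …, B_nC_n}`. -/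
def inL {n : ℕ} : Letter n → Letter n → Prop
  | .c, .b => True
  | .d, .a => True
  | .A i, .D j => i = j
  | .B i, .C j => i = j ∧ 1 ≤ i.val
  | _, _ => False

/-- A word is in left normal form if no two consecutive letters form a word in `R_n`. -/
def LeftNormal {n : ℕ} (w : List (Letter n)) : Prop :=
  List.Chain' (fun x y => ¬ inR x y) w

/-- `v ∈ M_n` is an intersection base if some word `a_1 ⋯ a_m` (`m ≥ 2`) in left
normal form equals `v` in `M_n` and its final two letters form a word in `L_n`. -/
def IsIntersectionBase {n : ℕ} (v : Mn n) : Prop :=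
  ∃ (w : List (Letter n)) (x y : Letter n),
    LeftNormal (w ++ [x, y]) ∧ word (w ++ [x, y]) = v ∧ inL x y

/-- The principal right ideal `pM_n`. -/
def rIdeal {n : ℕ} (p : Mn n) : Set (Mn n) := {x | ∃ m, x = p * m}


/-- The rewriting of a two-letter word of `R_n` to the corresponding word of `L_n`;
all other two-letter words are fixed. -/
def reduce {n : ℕ} : Letter n → Letter n → Letter n × Letter n
  | .d, .b => if h : 0 < n then
      (.A ⟨n - 1, Nat.sub_lt h Nat.one_pos⟩, .D ⟨n - 1, Nat.sub_lt h Nat.one_pos⟩) else (.d, .b)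
  | .A i, .C j => if i = j then
      if 0 < i.val then (.A ⟨i.val - 1, by omega⟩, .D ⟨i.val - 1, by omega⟩) else (.d, .a)
      else (.A i, .C j)
  | .B i, .D j => if i = j then
      if h : i.val + 1 < n then (.B ⟨i.val + 1, h⟩, .C ⟨i.val + 1, h⟩) else (.c, .b)
      else (.B i, .D j)
  | x, y => (x, y)

/-- Append a letter to a word in left normal form, stored in reverse, and normalize. -/
def push {n : ℕ} : List (Letter n) → Letter n → List (Letter n)
  | [], x => [x]
  | s :: l, x => (reduce s x).2 :: (reduce s x).1 :: l

/-- The reversed left normal form of a word. -/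
def normalForm {n : ℕ} (w : List (Letter n)) : List (Letter n) := w.foldl push []

theorem reduce_of_not_inR {n : ℕ} {x y : Letter n} (h : ¬ inR x y) : reduce x y = (x, y) := by
  cases x <;> cases y <;> simp_all [reduce, inR]

theorem inL_reduce {n : ℕ} {x y : Letter n} (hn : 0 < n) (h : inR x y) :
    inL (reduce x y).1 (reduce x y).2 := by
  cases x <;> cases y <;> simp_all [reduce, inR, inL] <;> split_ifs <;> simp_all

theorem not_inR_of_inL {n : ℕ} {x y : Letter n} (h : inL x y) : ¬ inR x y := by
  cases x <;> cases y <;> simp_all [inR, inL]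

theorem not_inR_of_inL_right {n : ℕ} {x y : Letter n} (h : inL x y) (t : Letter n) :
    ¬ inR t x := by
  cases x <;> cases y <;> simp_all [inL] <;> cases t <;> simp [inR]

/-- Distinct words of `R_n` starting with distinct letters have distinct reductions. -/
theorem eq_of_reduce_eq {n : ℕ} {s x s' y : Letter n} (h : inR s x) (h' : inR s' y)
    (e : reduce s x = reduce s' y) : s = s' := by
  cases s <;> cases x <;> simp [inR] at h <;> cases s' <;> cases y <;> simp [inR] at h' <;>
    grind [reduce]

theorem inR_right_unique {n : ℕ} {s x y : Letter n} (h : inR s x) (h' : inR s y) : x = y := by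
  cases s <;> cases x <;> simp [inR] at h <;> cases y <;> simp_all [inR]

/-- For `n ≥ 2` the reductions do not swap two first letters. -/
theorem reduce_fst_ne {n : ℕ} (hn : 2 ≤ n) {s x s' y : Letter n} (h : inR s x) (h' : inR s' y)
    (e : (reduce s x).1 = s') : (reduce s' y).1 ≠ s := by
  intro e'
  cases s <;> cases x <;> simp [inR] at h <;> cases s' <;> cases y <;> simp [inR] at h' <;>
    grind [reduce]

theorem rel_push {n : ℕ} {u v : FreeMonoid (Letter n)} (h : rel n u v) (l : List (Letter n)) :
    (toList u).foldl push l = (toList v).foldl push l := by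
  cases h <;> cases l <;> simp [push, reduce] <;> grind

theorem Mcon_push {n : ℕ} {u v : FreeMonoid (Letter n)} (h : Mcon n u v) (l : List (Letter n)) :
    (toList u).foldl push l = (toList v).foldl push l := by
  change ConGen.Rel (rel n) u v at h
  induction h generalizing l with
  | of _ _ h => exact rel_push h l
  | refl => rfl
  | symm _ ih => exact (ih l).symm
  | trans _ _ ih ih' => exact (ih l).trans (ih' l)
  | mul _ _ ih ih' => simp only [toList_mul, List.foldl_append, ih, ih']

theorem word_append {n : ℕ} (u v : List (Letter n)) : word (u ++ v) = word u * word v := by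
  simp [word, ofList_append]

theorem word_singleton {n : ℕ} (x : Letter n) : word [x] = gen x := rfl

theorem exists_word {n : ℕ} (p : Mn n) : ∃ u, p = word u := by
  obtain ⟨u, rfl⟩ := Con.mk'_surjective p
  exact ⟨toList u, rfl⟩

theorem normalForm_eq_of_word_eq {n : ℕ} {u v : List (Letter n)} (h : word u = word v) :
    normalForm u = normalForm v :=
  Mcon_push ((Con.eq _).1 h) []

theorem normalForm_concat {n : ℕ} (u : List (Letter n)) (x : Letter n) :
    normalForm (u ++ [x]) = push (normalForm u) x := by
  simp [normalForm]

theorem word_eq_of_rel {n : ℕ} {u v : FreeMonoid (Letter n)} (h : rel n u v) :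
    word (toList u) = word (toList v) :=
  (Con.eq _).2 (ConGen.Rel.of _ _ h)

theorem word_reduce {n : ℕ} (x y : Letter n) :
    word [(reduce x y).1, (reduce x y).2] = word [x, y] := by
  by_cases h : inR x y
  · cases x <;> cases y <;> simp [inR] at h
    · simp only [reduce]
      split_ifs with hn
      · exact word_eq_of_rel (rel.An hn)
      · rfl
    · subst h
      rename_i i
      obtain ⟨i, hi⟩ := i
      cases i with
      | zero => simpa [reduce] using word_eq_of_rel (rel.da hi)
      | succ i => simpa [reduce] using word_eq_of_rel (rel.AD i hi)
    · subst h
      rename_i i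
      obtain ⟨i, hi⟩ := i
      simp only [reduce, if_true]
      split_ifs with hn
      · exact word_eq_of_rel (rel.BC i hn)
      · obtain rfl : i = n - 1 := by omega
        exact word_eq_of_rel (rel.cb (by omega))
  · rw [reduce_of_not_inR h]

theorem word_push {n : ℕ} (l : List (Letter n)) (x : Letter n) :
    word (push l x).reverse = word l.reverse * gen x := by
  cases l with
  | nil => simp [push, word, gen]
  | cons s l =>
    have h := word_reduce s x
    simp only [push, List.reverse_cons, List.append_assoc, List.singleton_append]
    rw [word_append, h, word_append, mul_assoc, ← word_singleton, ← word_append]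
    rfl

theorem word_normalForm {n : ℕ} (u : List (Letter n)) : word (normalForm u).reverse = word u := by
  induction u using List.reverseRecOn with
  | nil => rfl
  | append_singleton u x ih => rw [normalForm_concat, word_push, ih, word_append, word_singleton]

theorem leftNormal_iff {n : ℕ} {l : List (Letter n)} :
    LeftNormal l ↔ l.IsChain (fun x y => ¬ inR x y) := Iff.rfl

theorem leftNormal_append_pair {n : ℕ} {l : List (Letter n)} {x y : Letter n}
    (hl : LeftNormal l) (h : inL x y) : LeftNormal (l ++ [x, y]) := by
  rw [leftNormal_iff] at *
  refine List.isChain_append.2 ⟨hl, by simpa using not_inR_of_inL h, ?_⟩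
  intro t _ z hz
  obtain rfl : x = z := by simpa using hz
  exact not_inR_of_inL_right h t

theorem leftNormal_push {n : ℕ} (hn : 0 < n) {l : List (Letter n)} (hl : LeftNormal l.reverse)
    (x : Letter n) : LeftNormal (push l x).reverse := by
  cases l with
  | nil => simp [push, leftNormal_iff]
  | cons s l =>
    simp only [push, List.reverse_cons, List.append_assoc, List.singleton_append] at hl ⊢
    by_cases h : inR s x
    · exact leftNormal_append_pair (List.IsChain.left_of_append hl) (inL_reduce hn h)
    · rw [reduce_of_not_inR h]
      rw [leftNormal_iff, List.isChain_append] at hl ⊢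
      exact ⟨hl.1, by simpa using h, by simpa using hl.2.2⟩

theorem leftNormal_normalForm {n : ℕ} (hn : 0 < n) (u : List (Letter n)) :
    LeftNormal (normalForm u).reverse := by
  induction u using List.reverseRecOn with
  | nil => simp [normalForm, leftNormal_iff]
  | append_singleton u x ih =>
    rw [normalForm_concat]
    exact leftNormal_push hn ih x

/-- Of two two-letter words with the same reduction and distinct first letters, exactly one
lies in `R_n`. -/
theorem inR_iff_not_inR {n : ℕ} {s x s' y : Letter n} (hs : s ≠ s')
    (e : reduce s x = reduce s' y) : inR s x ↔ ¬ inR s' y := by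
  refine ⟨fun h h' => hs (eq_of_reduce_eq h h' e), fun h' => ?_⟩
  by_contra h
  rw [reduce_of_not_inR h, reduce_of_not_inR h'] at e
  exact hs (Prod.ext_iff.1 e).1

theorem inL_of_reduce_eq {n : ℕ} (hn : 0 < n) {s x s' y : Letter n} (hs : s ≠ s')
    (e : reduce s x = reduce s' y) : inL (reduce s x).1 (reduce s x).2 := by
  by_cases h : inR s x
  · exact inL_reduce hn h
  · rw [e]
    exact inL_reduce hn (not_not.1 (mt (inR_iff_not_inR hs e).2 h))

/-- For `n ≥ 2` two distinct first letters determine the common reduction. -/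
theorem reduce_eq_reduce {n : ℕ} (hn : 2 ≤ n) {s x s' y w z : Letter n} (hs : s ≠ s')
    (e : reduce s x = reduce s' y) (e' : reduce s w = reduce s' z) :
    reduce s x = reduce s w := by
  have h := inR_iff_not_inR hs e
  have h' := inR_iff_not_inR hs e'
  by_cases hx : inR s x <;> by_cases hw : inR s w
  · rw [inR_right_unique hx hw]
  · refine absurd ?_ (reduce_fst_ne hn hx (not_not.1 (mt h'.2 hw)) ?_)
    · rw [← e', reduce_of_not_inR hw]
    · rw [e, reduce_of_not_inR (h.1 hx)]
  · refine absurd ?_ (reduce_fst_ne hn hw (not_not.1 (mt h.2 hx)) ?_)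
    · rw [← e, reduce_of_not_inR hx]
    · rw [e', reduce_of_not_inR (h'.1 hw)]
  · rw [e, e', inR_right_unique (not_not.1 (mt h.2 hx)) (not_not.1 (mt h'.2 hw))]

theorem push_normalForm_eq {n : ℕ} {u v : List (Letter n)} {x y : Letter n}
    (h : word u * gen x = word v * gen y) :
    push (normalForm u) x = push (normalForm v) y := by
  rw [← normalForm_concat, ← normalForm_concat]
  apply normalForm_eq_of_word_eq
  rw [word_append, word_append, word_singleton, word_singleton, h]

/-- uniqueness of the intersection base for `n ≥ 2`. -/
theorem Mn_unique_intersection_base (n : ℕ) (hn : 2 ≤ n)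
    (p q : Mn n) (hp : p ≠ 1) (hq : q ≠ 1) (hpq : p ≠ q)
    (x y w z : Letter n) (v₁ v₂ : Mn n)
    (h1x : v₁ = p * gen x) (h1y : v₁ = q * gen y)
    (h2w : v₂ = p * gen w) (h2z : v₂ = q * gen z) :
    IsIntersectionBase v₁ ∧ IsIntersectionBase v₂ ∧ v₁ = v₂ := by
  obtain ⟨u, rfl⟩ := exists_word p
  obtain ⟨v, rfl⟩ := exists_word q
  have hn0 : 0 < n := by omega
  have e₁ := push_normalForm_eq (h1x.symm.trans h1y)
  have e₂ := push_normalForm_eq (h2w.symm.trans h2z)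
  have hl := leftNormal_normalForm hn0 u
  rw [← word_normalForm u] at hp hpq h1x h2w
  rw [← word_normalForm v] at hq hpq
  rw [← word_push] at h1x h2w
  rcases hu : normalForm u with _ | ⟨s, l⟩
  · exact absurd (by rw [hu]; rfl) hp
  rcases hv : normalForm v with _ | ⟨s', l'⟩
  · exact absurd (by rw [hv]; rfl) hq
  rw [hu] at hl
  simp only [hu, hv, push, List.cons.injEq] at e₁ e₂ h1x h2w hpq
  obtain ⟨e₁₂, e₁₁, rfl⟩ := e₁
  have hs : s ≠ s' := by
    rintro rfl
    exact hpq rfl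
  have r₁ : reduce s x = reduce s' y := Prod.ext e₁₁ e₁₂
  have r₂ : reduce s w = reduce s' z := Prod.ext e₂.2.1 e₂.1
  have hl' : LeftNormal l.reverse := by
    rw [List.reverse_cons] at hl
    exact List.IsChain.left_of_append hl
  have base {t t' k k' : Letter n} (ht : t ≠ t') (r : reduce t k = reduce t' k') :
      IsIntersectionBase (word ((reduce t k).2 :: (reduce t k).1 :: l).reverse) := by
    have hL := inL_of_reduce_eq hn0 ht r
    exact ⟨l.reverse, _, _, leftNormal_append_pair hl' hL, by simp, hL⟩
  rw [h1x, h2w]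
  exact ⟨base hs r₁, base hs r₂, by rw [reduce_eq_reduce hn hs r₁ r₂]⟩

end Malcev
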